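/- arXiv:1804.02268 — 6 statements merged into one kernel-verified Lean document; each statement's English description precedes it below -/
import Mathlib

section
/- Let 𝒰 = ∏_i U_i be a parallel utility domain (every type of every agent is parallel). Then every social choice mechanism on 𝒰 that is DSIC, deterministic, IR and satisfies no subsidy has a choice rule x satisfying weak monotonicity (W-Mon): for all i, all u_{-i} ∈ 𝒰_{-i}, and all u_i, u_i' ∈ U_i, if x(u_i,u_{-i}) = a and x(u_i',u_{-i}) = b, then p'_{i,b} − p_{i,b} ≥ p'_{i,a} − p_{i,a}, where p and p' denote the willingness to pay of u_i and u_i' respectively. -/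
/-!
Common framework: agents indexed by `I`, alternatives `A` (finite, nonempty).
A type of an agent is a family `u : A → ℝ → ℝ`, where `u a z` is the utility
when alternative `a` is selected and the agent pays `z`.
-/

noncomputable section

namespace NQLSC

/-- A type (utility family) of an agent. -/
abbrev Util (A : Type*) := A → ℝ → ℝ

variable {A I : Type*}

/-- (S1): each `u a` is continuous and strictly decreasing in the payment. -/
def S1 (u : Util A) : Prop := ∀ a, Continuous (u a) ∧ StrictAnti (u a)

/-- `min_{a'∈A} u_{a'}(0)`, the value of the worst alternative at zero payment. -/
def minVal [Fintype A] [Nonempty A] (u : Util A) : ℝ :=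
  Finset.univ.inf' Finset.univ_nonempty (fun a => u a 0)

/-- (S2): as the payment tends to `+∞`, the utility of every alternative drops
(strictly) below `min_{a'} u_{a'}(0)`; for strictly decreasing utilities this is
equivalent to the utility being below that value at some payment. -/
def S2 [Fintype A] [Nonempty A] (u : Util A) : Prop :=
  ∀ a, ∃ z : ℝ, u a z < minVal u

/-- The willingness to pay `p_a = u_a⁻¹(min_{a'} u_{a'}(0))` (under (S1),(S2) this
`sInf` is the unique payment at which `u a` attains `minVal u`). -/
def wtp [Fintype A] [Nonempty A] (u : Util A) (a : A) : ℝ :=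
  sInf {z : ℝ | u a z ≤ minVal u}

/-- A parallel type: (S1), (S2), and for all `a, b` with `v_a ≥ v_b` and all
`z ∈ [0, p_b]`, `u_a (z + (p_a − p_b)) = u_b z`. -/
def IsParallel [Fintype A] [Nonempty A] (u : Util A) : Prop :=
  S1 u ∧ S2 u ∧ ∀ a b : A, u b 0 ≤ u a 0 → ∀ z : ℝ, 0 ≤ z → z ≤ wtp u b →
    u a (z + (wtp u a - wtp u b)) = u b z

/-- Unrestricted willingness to pay: every nonnegative vector with a zero entry is
the willingness-to-pay vector of some type in the domain. -/
def UnrestrictedWTP [Fintype A] [Nonempty A] (U : Set (Util A)) : Prop :=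
  ∀ lam : A → ℝ, (∀ a, 0 ≤ lam a) → (∃ a, lam a = 0) →
    ∃ u ∈ U, ∀ a, wtp u a = lam a

/-- Dominant-strategy incentive compatibility of a (deterministic) mechanism `(x,t)`
on the domain `𝒰 = ∏ i, U i`. -/
def DSIC [DecidableEq I] (U : I → Set (Util A)) (x : (I → Util A) → A)
    (t : (I → Util A) → I → ℝ) : Prop :=
  ∀ uh : I → Util A, (∀ j, uh j ∈ U j) → ∀ i, ∀ ui ∈ U i,
    ui (x uh) (t uh i) ≤
      ui (x (Function.update uh i ui)) (t (Function.update uh i ui) i)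

/-- Individual rationality. -/
def IR [Fintype A] [Nonempty A] [DecidableEq I] (U : I → Set (Util A))
    (x : (I → Util A) → A) (t : (I → Util A) → I → ℝ) : Prop :=
  ∀ uh : I → Util A, (∀ j, uh j ∈ U j) → ∀ i, ∀ ui ∈ U i,
    minVal ui ≤ ui (x (Function.update uh i ui)) (t (Function.update uh i ui) i)

/-- No subsidy: the mechanism never makes positive transfers to an agent. -/
def NoSubsidy (U : I → Set (Util A)) (t : (I → Util A) → I → ℝ) : Prop :=
  ∀ u : I → Util A, (∀ j, u j ∈ U j) → ∀ i, 0 ≤ t u i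

/-- Ontoness of the choice rule on the given domain. -/
def OntoMech (U : I → Set (Util A)) (x : (I → Util A) → A) : Prop :=
  ∀ a, ∃ u : I → Util A, (∀ j, u j ∈ U j) ∧ x u = a

/-- A payment at which `a` is still individually rational is at most the willingness
to pay for `a`. -/
theorem le_wtp_of_minVal_le [Fintype A] [Nonempty A] {u : Util A} (h1 : S1 u) (h2 : S2 u)
    {a : A} {s : ℝ} (hs : minVal u ≤ u a s) : s ≤ wtp u a := by
  obtain ⟨z, hz⟩ := h2 a
  exact le_csInf ⟨z, hz.le⟩ fun w hw => (h1 a).2.le_iff_ge.mp (le_trans hw hs)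

/-- For a parallel type, weak preference for an individually rational outcome `(a, s)` over
`(b, r)`, both at nonnegative payments, implies that `(a, s)` has at least as large a surplus
of willingness to pay over payment. -/
theorem IsParallel.wtp_sub_le_wtp_sub [Fintype A] [Nonempty A] {u : Util A}
    (hu : IsParallel u) {a b : A} {s r : ℝ} (hs : 0 ≤ s) (hr : 0 ≤ r)
    (hIR : minVal u ≤ u a s) (hle : u b r ≤ u a s) :
    wtp u b - r ≤ wtp u a - s := by
  obtain ⟨h1, h2, hpar⟩ := hu
  have hsa := le_wtp_of_minVal_le h1 h2 hIR
  by_contra! hlt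
  rcases le_total (u a 0) (u b 0) with h | h
  · have heq := hpar b a h s hs hsa
    have := (h1 b).2 (show r < s + (wtp u b - wtp u a) by linarith)
    linarith
  · have heq := hpar a b h r hr (by linarith)
    have := (h1 a).2 (show r + (wtp u a - wtp u b) < s by linarith)
    linarith

/-- On a parallel utility domain, every DSIC, deterministic, IR,
no-subsidy mechanism satisfies weak monotonicity (W-Mon) in willingness to pay. -/
theorem wmon_of_dsic
    [Fintype A] [Nonempty A] [Fintype I] [DecidableEq I]
    (U : I → Set (Util A))
    (hpar : ∀ i, ∀ u ∈ U i, IsParallel u)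
    (x : (I → Util A) → A) (t : (I → Util A) → I → ℝ)
    (hDSIC : DSIC U x t) (hIR : IR U x t) (hNS : NoSubsidy U t) :
    ∀ uh : I → Util A, (∀ j, uh j ∈ U j) → ∀ i, ∀ ui ∈ U i, ∀ ui' ∈ U i,
      wtp ui' (x (Function.update uh i ui)) - wtp ui (x (Function.update uh i ui)) ≤
        wtp ui' (x (Function.update uh i ui')) - wtp ui (x (Function.update uh i ui')) := by
  intro uh huh i ui hui ui' hui'
  have hmem : ∀ w ∈ U i, ∀ j, Function.update uh i w j ∈ U j := fun w hw j => by
    rcases eq_or_ne j i with rfl | hj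
    · simpa using hw
    · simpa [hj] using huh j
  have key : ∀ w ∈ U i, ∀ w' ∈ U i,
      wtp w (x (Function.update uh i w')) - t (Function.update uh i w') i ≤
        wtp w (x (Function.update uh i w)) - t (Function.update uh i w) i := by
    intro w hw w' hw'
    have hdev := hDSIC (Function.update uh i w') (hmem w' hw') i w hw
    rw [Function.update_idem] at hdev
    exact (hpar i w hw).wtp_sub_le_wtp_sub (hNS _ (hmem w hw) i) (hNS _ (hmem w' hw') i)
      (hIR uh huh i w hw) hdev
  linarith [key ui hui ui' hui', key ui' hui' ui hui]
end NQLSC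
end
end

section
/- (IC ⇒ PAD.) Every social choice mechanism on an unrestricted parallel utility domain 𝒰 that is DSIC, deterministic, IR and satisfies no subsidy has a choice rule x satisfying positive association of differences (PAD): for all u, u' ∈ 𝒰, if x(u) = a and p'_{i,a} − p_{i,a} > p'_{i,b} − p_{i,b} for all b ≠ a and all agents i, then x(u') = a. -/
/-!
Common framework: agents indexed by `I`, alternatives `A` (finite, nonempty).
A type of an agent is a family `u : A → ℝ → ℝ`, where `u a z` is the utility
when alternative `a` is selected and the agent pays `z`.
-/

noncomputable section

namespace NQLSC

variable {A I : Type*}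

/-- A payment that leaves the agent at least the worst value is at most the willingness to pay. -/
theorem le_wtp [Fintype A] [Nonempty A] {u : Util A} (h1 : S1 u) (h2 : S2 u) {a : A} {z : ℝ}
    (hz : minVal u ≤ u a z) : z ≤ wtp u a := by
  obtain ⟨y, hy⟩ := h2 a
  exact le_csInf ⟨y, hy.le⟩ fun w hw => (h1 a).2.le_iff_ge.1 (le_trans hw hz)

/-- For parallel types, weak preference for an individually rational outcome `(a, r)` over `(b, s)`
is a comparison of surpluses. -/
theorem IsParallel.wtp_sub_le [Fintype A] [Nonempty A] {u : Util A} (hu : IsParallel u) {a b : A}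
    {r s : ℝ} (hr : 0 ≤ r) (hs : 0 ≤ s) (hmin : minVal u ≤ u a r) (hle : u b s ≤ u a r) :
    wtp u b - s ≤ wtp u a - r := by
  obtain ⟨h1, h2, hpar⟩ := hu
  have hra : r ≤ wtp u a := le_wtp h1 h2 hmin
  rcases le_or_gt s (wtp u b) with hsb | hsb
  · rcases le_total (u b 0) (u a 0) with hab | hab
    · rw [← hpar a b hab s hs hsb] at hle
      linarith [(h1 a).2.le_iff_ge.1 hle]
    · rw [← hpar b a hab r hr hra] at hle
      linarith [(h1 b).2.le_iff_ge.1 hle]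
  · linarith

/-- The choice is unchanged when a single agent moves to a type under which the willingness to pay
for the chosen alternative increases more than for any other. -/
theorem choice_update_eq [Fintype A] [Nonempty A] [DecidableEq I]
    {U : I → Set (Util A)} (hpar : ∀ i, ∀ u ∈ U i, IsParallel u)
    {x : (I → Util A) → A} {t : (I → Util A) → I → ℝ}
    (hDSIC : DSIC U x t) (hIR : IR U x t) (hNS : NoSubsidy U t)
    {w : I → Util A} (hw : ∀ j, w j ∈ U j) {i : I} {v : Util A} (hv : v ∈ U i)
    (hdiff : ∀ b, b ≠ x w → wtp v b - wtp (w i) b < wtp v (x w) - wtp (w i) (x w)) :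
    x (Function.update w i v) = x w := by
  by_contra hne
  have hw' : ∀ j, Function.update w i v j ∈ U j := by
    intro j
    rcases eq_or_ne j i with rfl | hj
    · simpa using hv
    · simpa [hj] using hw j
  have hic := hDSIC _ hw' i (w i) (hw i)
  have hir := hIR w hw i (w i) (hw i)
  rw [Function.update_idem, Function.update_eq_self] at hic
  rw [Function.update_eq_self] at hir
  have hold := (hpar i _ (hw i)).wtp_sub_le (hNS w hw i) (hNS _ hw' i) hir hic
  have hnew := (hpar i v hv).wtp_sub_le (hNS _ hw' i) (hNS w hw i) (hIR w hw i v hv)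
    (hDSIC w hw i v hv)
  linarith [hdiff _ hne]

/-- IC ⇒ PAD. On an unrestricted parallel utility domain, every DSIC,
deterministic, IR, no-subsidy mechanism has a choice rule satisfying positive
association of differences. -/
theorem pad_of_dsic
    [Fintype A] [Nonempty A] [Fintype I] [DecidableEq I]
    (U : I → Set (Util A))
    (hpar : ∀ i, ∀ u ∈ U i, IsParallel u)
    (hunr : ∀ i, UnrestrictedWTP (U i))
    (x : (I → Util A) → A) (t : (I → Util A) → I → ℝ)
    (hDSIC : DSIC U x t) (hIR : IR U x t) (hNS : NoSubsidy U t) :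
    ∀ u u' : I → Util A, (∀ j, u j ∈ U j) → (∀ j, u' j ∈ U j) → ∀ a : A,
      x u = a →
      (∀ i, ∀ b : A, b ≠ a →
        wtp (u' i) b - wtp (u i) b < wtp (u' i) a - wtp (u i) a) →
      x u' = a := by
  intro u u' hu hu' a hxa hdiff
  have key : ∀ S : Finset I, x (S.piecewise u' u) = a := by
    intro S
    induction S using Finset.induction_on with
    | empty => simpa using hxa
    | insert i S hi ih =>
      have hmem : ∀ j, S.piecewise u' u j ∈ U j := by
        intro j
        by_cases hj : j ∈ S
        · simpa [hj] using hu' j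
        · simpa [hj] using hu j
      rw [Finset.piecewise_insert, choice_update_eq hpar hDSIC hIR hNS hmem (hu' i), ih]
      rw [ih, Finset.piecewise_eq_of_notMem _ _ _ hi]
      exact hdiff i
  simpa using key Finset.univ
end NQLSC
end
end

section
/- (W-Mon ⇒ PAD.) Let x : 𝒰 → A be a choice rule on a parallel utility domain 𝒰 = ∏_i U_i that satisfies weak monotonicity (W-Mon). Then x satisfies positive association of differences (PAD): for all u, u' ∈ 𝒰, if x(u) = a and p'_{i,a} − p_{i,a} > p'_{i,b} − p_{i,b} for all b ≠ a and all agents i, then x(u') = a. -/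
/-!
Common framework: agents indexed by `I`, alternatives `A` (finite, nonempty).
A type of an agent is a family `u : A → ℝ → ℝ`, where `u a z` is the utility
when alternative `a` is selected and the agent pays `z`.
-/

noncomputable section

namespace NQLSC

variable {A I : Type*}

/-- W-Mon ⇒ PAD. On a parallel utility domain, every choice rule
satisfying weak monotonicity satisfies positive association of differences. -/
theorem pad_of_wmon
    [Fintype A] [Nonempty A] [Fintype I] [DecidableEq I]
    (U : I → Set (Util A))
    (hpar : ∀ i, ∀ u ∈ U i, IsParallel u)
    (x : (I → Util A) → A)
    -- W-Mon
    (hW : ∀ uh : I → Util A, (∀ j, uh j ∈ U j) → ∀ i, ∀ ui ∈ U i, ∀ ui' ∈ U i,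
      wtp ui' (x (Function.update uh i ui)) - wtp ui (x (Function.update uh i ui)) ≤
        wtp ui' (x (Function.update uh i ui')) - wtp ui (x (Function.update uh i ui'))) :
    -- PAD
    ∀ u u' : I → Util A, (∀ j, u j ∈ U j) → (∀ j, u' j ∈ U j) → ∀ a : A,
      x u = a →
      (∀ i, ∀ b : A, b ≠ a →
        wtp (u' i) b - wtp (u i) b < wtp (u' i) a - wtp (u i) a) →
      x u' = a := by
  intro u u' hu hu' a hxu hlt
  have key : ∀ s : Finset I, x (s.piecewise u' u) = a := by
    intro s
    induction s using Finset.induction_on with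
    | empty => simpa using hxu
    | insert i s his ih =>
      have hmem : ∀ j, s.piecewise u' u j ∈ U j := by
        intro j
        by_cases hj : j ∈ s
        · simpa [hj] using hu' j
        · simpa [hj] using hu j
      have hold : Function.update (s.piecewise u' u) i (u i) = s.piecewise u' u := by
        rw [Function.update_eq_self_iff, Finset.piecewise_eq_of_notMem _ _ _ his]
      have hmono := hW _ hmem i (u i) (hu i) (u' i) (hu' i)
      rw [hold, ih, ← Finset.piecewise_insert] at hmono
      by_contra hne
      exact (hlt i _ hne).not_ge hmono
  simpa using key Finset.univ
end NQLSC
end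
end

section
/- (Price characterization for affine maximizers.) Let (x,t) be a social choice mechanism on an unrestricted parallel utility domain 𝒰 that is DSIC, deterministic, onto, IR, satisfies no subsidy, and whose choice rule satisfies x(u) ∈ argmax_{a∈A} (Σ_i k_i p_{i,a} + C_a) for all u ∈ 𝒰, with nonnegative weights (k_i) and real constants (C_a). Then the agent-independent prices are determined as follows: (i) for every agent i with k_i > 0 and every u_{-i} ∈ 𝒰_{-i}, with a*_{-i} ∈ argmax_{a∈A} (Σ_{j≠i} k_j p_{j,a} + C_a), one has t_{i,a}(u_{-i}) = (1/k_i)(Σ_{j≠i} k_j p_{j,a*_{-i}} + C_{a*_{-i}} − Σ_{j≠i} k_j p_{j,a} − C_a) for every a ∈ A; (ii) for every agent i with k_i = 0 and every u_{-i} ∈ 𝒰_{-i} for which there is a*_{-i} ∈ A with Σ_{j≠i} k_j p_{j,a} + C_a < Σ_{j≠i} k_j p_{j,a*_{-i}} + C_{a*_{-i}} for all a ≠ a*_{-i}, one has t_{i,a*_{-i}}(u_{-i}) = 0 and t_{i,a}(u_{-i}) = +∞ for all a ≠ a*_{-i} (i.e. no report of agent i makes x select a). -/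
/-!
Common framework: agents indexed by `I`, alternatives `A` (finite, nonempty).
A type of an agent is a family `u : A → ℝ → ℝ`, where `u a z` is the utility
when alternative `a` is selected and the agent pays `z`.
-/

noncomputable section

namespace NQLSC

variable {A I : Type*}

/-- The set whose infimum defines the willingness to pay contains no negative payment. -/
theorem zero_mem_lowerBounds [Fintype A] [Nonempty A] {u : Util A} (hu : IsParallel u) (a : A) :
    0 ∈ lowerBounds {z : ℝ | u a z ≤ minVal u} := fun _ hz =>
  (hu.1 a).2.le_iff_ge.mp (le_trans hz (Finset.inf'_le _ (Finset.mem_univ a)))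

/-- The willingness to pay belongs to the set whose infimum defines it. -/
theorem apply_wtp_le_minVal [Fintype A] [Nonempty A] {u : Util A} (hu : IsParallel u) (a : A) :
    u a (wtp u a) ≤ minVal u := by
  have hclosed : IsClosed {z : ℝ | u a z ≤ minVal u} := isClosed_le (hu.1 a).1 continuous_const
  obtain ⟨z, hz⟩ := hu.2.1 a
  exact hclosed.csInf_mem ⟨z, hz.le⟩ ⟨0, zero_mem_lowerBounds hu a⟩

/-- A payment leaving at least the worst value is at most the willingness to pay. -/
theorem le_wtp_of_minVal_le_s13 [Fintype A] [Nonempty A] {u : Util A} (hu : IsParallel u) {a : A}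
    {z : ℝ} (hz : minVal u ≤ u a z) : z ≤ wtp u a :=
  (hu.1 a).2.le_iff_ge.mp ((apply_wtp_le_minVal hu a).trans hz)

/-- Below the willingness to pay the utility exceeds the worst value. -/
theorem minVal_lt_of_lt_wtp [Fintype A] [Nonempty A] {u : Util A} (hu : IsParallel u) {a : A}
    {z : ℝ} (hz : z < wtp u a) : minVal u < u a z :=
  not_le.mp (notMem_of_lt_csInf (s := {z : ℝ | u a z ≤ minVal u}) hz
    ⟨0, zero_mem_lowerBounds hu a⟩)

/-- An alternative of zero willingness to pay yields at most the worst value at any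
nonnegative payment. -/
theorem apply_le_minVal_of_wtp_eq_zero [Fintype A] [Nonempty A] {u : Util A} (hu : IsParallel u)
    {a : A} (ha : wtp u a = 0) {z : ℝ} (hz : 0 ≤ z) : u a z ≤ minVal u :=
  ((hu.1 a).2.antitone (ha ▸ hz)).trans (apply_wtp_le_minVal hu a)

/-- Some type has willingness to pay `q` for `a` and `0` for all other alternatives, provided
another alternative exists. -/
theorem UnrestrictedWTP.exists_single [Fintype A] [Nonempty A] {U : Set (Util A)}
    (hU : UnrestrictedWTP U) {a b : A} (hab : b ≠ a) {q : ℝ} (hq : 0 ≤ q) :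
    ∃ u ∈ U, wtp u a = q ∧ ∀ c, c ≠ a → wtp u c = 0 := by
  classical
  have hnonneg : (0 : A → ℝ) ≤ Pi.single a q := Pi.single_nonneg.mpr hq
  obtain ⟨u, hu, hw⟩ := hU (Pi.single a q) (fun c => hnonneg c)
    ⟨b, by rw [Pi.single_eq_of_ne hab]⟩
  exact ⟨u, hu, by rw [hw, Pi.single_eq_same], fun c hc => by rw [hw, Pi.single_eq_of_ne hc]⟩

theorem update_mem [DecidableEq I] {U : I → Set (Util A)} {uh : I → Util A}
    (huh : ∀ j, uh j ∈ U j) {i : I} {ui : Util A} (hui : ui ∈ U i) (j : I) :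
    Function.update uh i ui j ∈ U j := by
  rcases eq_or_ne j i with rfl | hj
  · simpa using hui
  · simpa [hj] using huh j

/-- The incentive constraint between two reports of one agent. -/
theorem DSIC.update_le [DecidableEq I] {U : I → Set (Util A)} {x : (I → Util A) → A}
    {t : (I → Util A) → I → ℝ} (h : DSIC U x t) {uh : I → Util A} (huh : ∀ j, uh j ∈ U j)
    {i : I} {ui vi : Util A} (hui : ui ∈ U i) (hvi : vi ∈ U i) :
    ui (x (Function.update uh i vi)) (t (Function.update uh i vi) i) ≤
      ui (x (Function.update uh i ui)) (t (Function.update uh i ui) i) := by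
  simpa using h _ (update_mem huh hvi) i ui hui

/-- Reports selecting the same alternative lead to ordered payments. -/
theorem DSIC.payment_le [Fintype A] [Nonempty A] [DecidableEq I] {U : I → Set (Util A)}
    {x : (I → Util A) → A} {t : (I → Util A) → I → ℝ} (h : DSIC U x t)
    (hpar : ∀ i, ∀ u ∈ U i, IsParallel u) {uh : I → Util A} (huh : ∀ j, uh j ∈ U j)
    {i : I} {ui vi : Util A} (hui : ui ∈ U i) (hvi : vi ∈ U i)
    (hxeq : x (Function.update uh i ui) = x (Function.update uh i vi)) :
    t (Function.update uh i ui) i ≤ t (Function.update uh i vi) i := by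
  have := h.update_le huh hui hvi
  rw [hxeq] at this
  exact ((hpar i ui hui).1 _).2.le_iff_ge.mp this

/-- An individually rational payment is at most the willingness to pay for the outcome. -/
theorem IR.payment_le_wtp [Fintype A] [Nonempty A] [DecidableEq I] {U : I → Set (Util A)}
    {x : (I → Util A) → A} {t : (I → Util A) → I → ℝ} (h : IR U x t)
    (hpar : ∀ i, ∀ u ∈ U i, IsParallel u) {uh : I → Util A} (huh : ∀ j, uh j ∈ U j)
    {i : I} {ui : Util A} (hui : ui ∈ U i) :
    t (Function.update uh i ui) i ≤ wtp ui (x (Function.update uh i ui)) :=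
  le_wtp_of_minVal_le_s13 (hpar i ui hui) (h uh huh i ui hui)

/-- The weighted welfare splits into the part of agent `i` and that of the others. -/
theorem sum_update_eq [Fintype A] [Nonempty A] [Fintype I] [DecidableEq I] (k : I → ℝ)
    (uh : I → Util A) (i : I) (ui : Util A) (c : A) :
    ∑ j, k j * wtp (Function.update uh i ui j) c =
      k i * wtp ui c + ∑ j ∈ Finset.univ.erase i, k j * wtp (uh j) c := by
  rw [← Finset.add_sum_erase _ _ (Finset.mem_univ i), Function.update_self]
  congr 1
  refine Finset.sum_congr rfl fun j hj => ?_
  rw [Function.update_of_ne (Finset.ne_of_mem_erase hj)]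

/-- Price characterization for affine maximizers. If a DSIC,
deterministic, onto, IR, no-subsidy mechanism on an unrestricted parallel utility
domain has a choice rule maximizing `Σ_i k_i p_{i,a} + C_a`, then the
agent-independent prices are pinned down: (i) for `k_i > 0`, every alternative is
attainable by some report of `i` and its price equals the weighted-VCG formula;
(ii) for `k_i = 0`, when the `−i` objective has a strict maximizer `a*`, every report
of `i` selects `a*` at price `0` (so every other alternative has price `+∞`). -/
theorem price_characterization
    [Fintype A] [Nonempty A] [Fintype I] [DecidableEq I]
    (U : I → Set (Util A))
    (hpar : ∀ i, ∀ u ∈ U i, IsParallel u)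
    (hunr : ∀ i, UnrestrictedWTP (U i))
    (x : (I → Util A) → A) (t : (I → Util A) → I → ℝ)
    (hDSIC : DSIC U x t) (hOnto : OntoMech U x)
    (hIR : IR U x t) (hNS : NoSubsidy U t)
    (k : I → ℝ) (C : A → ℝ) (hk : ∀ i, 0 ≤ k i)
    (hx : ∀ u : I → Util A, (∀ j, u j ∈ U j) → ∀ b : A,
      (∑ i, k i * wtp (u i) b) + C b ≤ (∑ i, k i * wtp (u i) (x u)) + C (x u)) :
    (∀ uh : I → Util A, (∀ j, uh j ∈ U j) → ∀ i, 0 < k i →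
      ∀ astar : A,
        (∀ c : A, (∑ j ∈ Finset.univ.erase i, k j * wtp (uh j) c) + C c ≤
          (∑ j ∈ Finset.univ.erase i, k j * wtp (uh j) astar) + C astar) →
      ∀ a : A,
        (∃ ui ∈ U i, x (Function.update uh i ui) = a) ∧
        (∀ ui ∈ U i, x (Function.update uh i ui) = a →
          t (Function.update uh i ui) i = (1 / k i) *
            (((∑ j ∈ Finset.univ.erase i, k j * wtp (uh j) astar) + C astar) -
             ((∑ j ∈ Finset.univ.erase i, k j * wtp (uh j) a) + C a)))) ∧
    (∀ uh : I → Util A, (∀ j, uh j ∈ U j) → ∀ i, k i = 0 →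
      ∀ astar : A,
        (∀ c : A, c ≠ astar →
          (∑ j ∈ Finset.univ.erase i, k j * wtp (uh j) c) + C c <
          (∑ j ∈ Finset.univ.erase i, k j * wtp (uh j) astar) + C astar) →
      ∀ ui ∈ U i, x (Function.update uh i ui) = astar ∧
        t (Function.update uh i ui) i = 0) := by
  have hmax : ∀ uh : I → Util A, (∀ j, uh j ∈ U j) → ∀ i, ∀ ui ∈ U i, ∀ b : A,
      k i * wtp ui b + ((∑ j ∈ Finset.univ.erase i, k j * wtp (uh j) b) + C b) ≤
        k i * wtp ui (x (Function.update uh i ui)) +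
          ((∑ j ∈ Finset.univ.erase i, k j * wtp (uh j) (x (Function.update uh i ui))) +
            C (x (Function.update uh i ui))) := by
    intro uh huh i ui hui b
    have := hx _ (update_mem huh hui) b
    rw [sum_update_eq, sum_update_eq] at this
    linarith
  have hzero : ∀ uh : I → Util A, (∀ j, uh j ∈ U j) → ∀ i, ∀ a : A,
      (∀ vi ∈ U i, x (Function.update uh i vi) = a) → ∀ ui ∈ U i,
        t (Function.update uh i ui) i = 0 := by
    intro uh huh i a hall ui hui
    obtain ⟨w, hw, hw0⟩ := hunr i (fun _ => 0) (fun _ => le_rfl) ⟨a, rfl⟩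
    have hle := hDSIC.payment_le hpar huh hui hw ((hall ui hui).trans (hall w hw).symm)
    have hIRw := hIR.payment_le_wtp hpar huh hw
    rw [hw0] at hIRw
    exact le_antisymm (hle.trans hIRw) (hNS _ (update_mem huh hui) i)
  refine ⟨fun uh huh i hki astar hstar a => ?_, fun uh huh i hki astar hstar ui hui => ?_⟩
  · rcases subsingleton_or_nontrivial A with hA | hA
    · refine ⟨⟨uh i, huh i, Subsingleton.elim _ _⟩, fun ui hui _ => ?_⟩
      rw [hzero uh huh i a (fun _ _ => Subsingleton.elim _ _) ui hui, Subsingleton.elim astar a,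
        sub_self, mul_zero]
    · have hm := hmax uh huh i
      set S : A → ℝ := fun c => (∑ j ∈ Finset.univ.erase i, k j * wtp (uh j) c) + C c with hS
      change ∀ c, S c ≤ S astar at hstar
      change ∀ ui ∈ U i, ∀ b, k i * wtp ui b + S b ≤
        k i * wtp ui (x (Function.update uh i ui)) + S (x (Function.update uh i ui)) at hm
      change _ ∧ ∀ ui ∈ U i, _ → _ = 1 / k i * (S astar - S a)
      set q : ℝ := 1 / k i * (S astar - S a) with hq
      have hkq : k i * q = S astar - S a := by rw [hq]; field_simp
      have hq0 : 0 ≤ q := mul_nonneg (by positivity) (sub_nonneg.mpr (hstar a))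
      obtain ⟨b, hb⟩ := exists_ne a
      have hreach : ∀ ε > 0, ∃ w ∈ U i, wtp w a = q + ε ∧ x (Function.update uh i w) = a := by
        intro ε hε
        obtain ⟨w, hw, hwa, hw0⟩ := (hunr i).exists_single hb (add_nonneg hq0 hε.le)
        refine ⟨w, hw, hwa, ?_⟩
        by_contra hne
        have h1 := hm w hw a
        rw [hwa, hw0 _ hne] at h1
        have h2 := hstar (x (Function.update uh i w))
        have h3 : 0 < k i * ε := mul_pos hki hε
        linarith
      refine ⟨?_, fun ui hui hxa => le_antisymm ?_ ?_⟩
      · obtain ⟨w, hw, -, hxw⟩ := hreach 1 one_pos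
        exact ⟨w, hw, hxw⟩
      · refine le_of_forall_pos_le_add fun ε hε => ?_
        obtain ⟨w, hw, hwa, hxw⟩ := hreach ε hε
        have hIRw := hIR.payment_le_wtp hpar huh hw
        rw [hxw, hwa] at hIRw
        exact (hDSIC.payment_le hpar huh hui hw (hxa.trans hxw.symm)).trans hIRw
      · by_contra! hlt
        have ht0 := hNS _ (update_mem huh hui) i
        set τ := t (Function.update uh i ui) i with hτ
        obtain ⟨r, hτr, hrq⟩ := exists_between hlt
        have hr0 : 0 ≤ r := ht0.trans hτr.le
        obtain ⟨w, hw, hwa, hw0⟩ := (hunr i).exists_single hb hr0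
        have hkr : k i * r < k i * q := mul_lt_mul_of_pos_left hrq hki
        have hne : x (Function.update uh i w) ≠ a := by
          intro heq
          have hastar : astar ≠ a := by
            rintro rfl
            linarith [mul_nonneg hki.le hr0]
          have h1 := hm w hw astar
          rw [heq, hwa, hw0 _ hastar] at h1
          linarith
        have h1 := hDSIC.update_le huh hw hui
        rw [hxa, ← hτ] at h1
        have h2 := apply_le_minVal_of_wtp_eq_zero (hpar i w hw) (hw0 _ hne)
          (hNS _ (update_mem huh hw) i)
        have h3 := minVal_lt_of_lt_wtp (hpar i w hw) (hwa.symm ▸ hτr)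
        linarith
  · have hall : ∀ vi ∈ U i, x (Function.update uh i vi) = astar := by
      intro vi hvi
      by_contra hne
      have h1 := hmax uh huh i vi hvi astar
      rw [hki, zero_mul, zero_mul, zero_add, zero_add] at h1
      exact absurd (hstar _ hne) (not_lt.mpr h1)
    exact ⟨hall ui hui, hzero uh huh i astar hall ui hui⟩
end NQLSC
end
end

section
/- Let 𝒰 = ∏_i U_i be a strictly parallel utility domain (every type of every agent is strictly parallel). Then every social choice mechanism on 𝒰 that is DSIC and deterministic has a choice rule satisfying weak monotonicity (W-Mon) in terms of willingness to pay: for all i, u_{-i} ∈ 𝒰_{-i}, and u_i, u_i' ∈ U_i, if x(u_i,u_{-i}) = a and x(u_i',u_{-i}) = b, then p'_{i,b} − p_{i,b} ≥ p'_{i,a} − p_{i,a}. -/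
/-!
Common framework: agents indexed by `I`, alternatives `A` (finite, nonempty).
A type of an agent is a family `u : A → ℝ → ℝ`, where `u a z` is the utility
when alternative `a` is selected and the agent pays `z`.
-/

noncomputable section

namespace NQLSC

variable {A I : Type*}

/-- A strictly parallel type: utility curves are horizontal shifts of each other
everywhere. -/
def IsStrictlyParallel [Fintype A] [Nonempty A] (u : Util A) : Prop :=
  S1 u ∧ S2 u ∧ ∀ a b : A, ∀ z : ℝ, u a (z + (wtp u a - wtp u b)) = u b z

/-- A strictly parallel type ranks outcomes by willingness to pay net of the payment. -/
theorem IsStrictlyParallel.le_iff [Fintype A] [Nonempty A] {u : Util A}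
    (hu : IsStrictlyParallel u) {a b : A} {s t : ℝ} :
    u b s ≤ u a t ↔ wtp u b - s ≤ wtp u a - t := by
  obtain ⟨h1, -, hshift⟩ := hu
  rw [← hshift a b s, (h1 a).2.le_iff_ge]
  constructor <;> intro h <;> linarith

/-- On a strictly parallel utility domain, every DSIC deterministic
mechanism satisfies weak monotonicity in willingness to pay. -/
theorem wmon_of_dsic_strictly_parallel
    [Fintype A] [Nonempty A] [Fintype I] [DecidableEq I]
    (U : I → Set (Util A))
    (hpar : ∀ i, ∀ u ∈ U i, IsStrictlyParallel u)
    (x : (I → Util A) → A) (t : (I → Util A) → I → ℝ)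
    (hDSIC : DSIC U x t) :
    ∀ uh : I → Util A, (∀ j, uh j ∈ U j) → ∀ i, ∀ ui ∈ U i, ∀ ui' ∈ U i,
      wtp ui' (x (Function.update uh i ui)) - wtp ui (x (Function.update uh i ui)) ≤
        wtp ui' (x (Function.update uh i ui')) - wtp ui (x (Function.update uh i ui')) := by
  intro uh huh i ui hui ui' hui'
  have mem_update : ∀ v ∈ U i, ∀ j, Function.update uh i v j ∈ U j := by
    intro v hv j
    obtain rfl | hj := eq_or_ne j i
    · simpa using hv
    · simpa [hj] using huh j
  have h := hDSIC _ (mem_update ui' hui') i ui hui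
  have h' := hDSIC _ (mem_update ui hui) i ui' hui'
  rw [Function.update_idem, (hpar i ui hui).le_iff] at h
  rw [Function.update_idem, (hpar i ui' hui').le_iff] at h'
  linarith

end NQLSC
end
end

section
/- (Roberts' theorem on strictly parallel domains.) Suppose |A| ≥ 3 and 𝒰 = ∏_i U_i is an unrestricted strictly parallel domain (each U_i is a set of strictly parallel types with unrestricted willingness to pay). Then for every social choice mechanism (x,t) on 𝒰 that is DSIC, deterministic and onto, there exist nonnegative weights k_1,…,k_n, not all zero, and real constants (C_a)_{a∈A}, such that for every u ∈ 𝒰, x(u) ∈ argmax_{a∈A} ( Σ_{i=1}^n k_i p_{i,a} + C_a ). -/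
/-!
Common framework: agents indexed by `I`, alternatives `A` (finite, nonempty).
A type of an agent is a family `u : A → ℝ → ℝ`, where `u a z` is the utility
when alternative `a` is selected and the agent pays `z`.
-/

noncomputable section

namespace NQLSC

variable {A I : Type*}

/-- On a strictly parallel type, weak preference over (alternative, payment) pairs is
quasilinear in the willingness to pay. -/
lemma IsStrictlyParallel.sub_le_sub_of_le [Fintype A] [Nonempty A] {u : Util A}
    (hu : IsStrictlyParallel u) {a b : A} {z z' : ℝ} (h : u a z ≤ u b z') :
    wtp u a - z ≤ wtp u b - z' := by
  rw [← hu.2.2 b a z, (hu.1 b).2.le_iff_ge] at h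
  linarith

/-- The abstract choice relations for which Roberts' theorem holds: `F v a` says that `a` is a
possible outcome at the valuation profile `v`. -/
structure IsRobertsRelation (F : (I → A → ℝ) → A → Prop) : Prop where
  total : ∀ v, ∃ a, F v a
  onto : ∀ a, ∃ v, F v a
  /-- Positive association of differences. -/
  pad : ∀ v v' a c, F v a → F v' c →
    (∀ i b, b ≠ a → v i a - v i b < v' i a - v' i b) → c = a

/-- The difference vectors `v(a) - v(b)` at which `a` may be chosen. -/
def choiceDiffs (F : (I → A → ℝ) → A → Prop) (a b : A) : Set (I → ℝ) :=
  {α | ∃ v, F v a ∧ ∀ i, v i a - v i b = α i}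

/-- The largest uniform handicap `p` for which `α - p` is still a choice difference. -/
def slack (F : (I → A → ℝ) → A → Prop) (a b : A) (α : I → ℝ) : ℝ :=
  sSup {p : ℝ | (fun i => α i - p) ∈ choiceDiffs F a b}

namespace IsRobertsRelation

variable {F : (I → A → ℝ) → A → Prop}

lemma not_forall_lt (hF : IsRobertsRelation F) {v v' : I → A → ℝ} {a b : A} (hab : a ≠ b)
    (ha : F v a) (hb : F v' b) : ¬ ∀ i, v i a - v i b < v' i a - v' i b := by
  classical
  intro h
  let m : I → ℝ := fun i => ((v i a - v i b) + (v' i a - v' i b)) / 2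
  let w : I → A → ℝ := fun i c =>
    if c = a then 0 else if c = b then - m i
    else - max (v i a - v i c) (v' i b - v' i c + m i) - 1
  obtain ⟨c, hc⟩ := hF.total w
  have hca : c = a := by
    refine hF.pad v w a c ha hc fun i d hd => ?_
    have := h i
    by_cases hdb : d = b
    · subst hdb
      simp only [w, m, if_true, if_neg hd]
      linarith
    · simp only [w, if_true, if_neg hd, if_neg hdb]
      linarith [le_max_left (v i a - v i d) (v' i b - v' i d + m i)]
  have hcb : c = b := by
    refine hF.pad v' w b c hb hc fun i d hd => ?_
    have := h i
    by_cases hda : d = a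
    · subst hda
      simp only [w, m, if_true, if_neg hab.symm]
      linarith
    · simp only [w, if_true, if_neg hd, if_neg hab.symm, if_neg hda]
      linarith [le_max_right (v i a - v i d) (v' i b - v' i d + m i)]
  exact hab (hca.symm.trans hcb)

lemma choiceDiffs_nonempty (hF : IsRobertsRelation F) (a b : A) :
    (choiceDiffs F a b).Nonempty := by
  obtain ⟨v, hv⟩ := hF.onto a
  exact ⟨fun i => v i a - v i b, v, hv, fun _ => rfl⟩

lemma not_mem_of_forall_lt (hF : IsRobertsRelation F) {a b : A} (hab : a ≠ b) {α : I → ℝ}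
    (hα : α ∈ choiceDiffs F a b) {v : I → A → ℝ} (h : ∀ i, α i < v i a - v i b) : ¬ F v b := by
  obtain ⟨w, hw, hwα⟩ := hα
  exact fun hb => hF.not_forall_lt hab hw hb fun i => (hwα i).symm ▸ h i

lemma mem_of_forall_lt (hF : IsRobertsRelation F) {a b : A} (hab : a ≠ b) {α β : I → ℝ}
    (hα : α ∈ choiceDiffs F a b) (h : ∀ i, α i < β i) : β ∈ choiceDiffs F a b := by
  classical
  obtain ⟨v, hv, hvα⟩ := hα
  let w : I → A → ℝ := fun i c => if c = a then v i b + β i else v i c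
  obtain ⟨c, hc⟩ := hF.total w
  have hca : c = a := by
    refine hF.pad v w a c hv hc fun i d hd => ?_
    simp only [w, if_true, if_neg hd]
    linarith [h i, hvα i]
  refine ⟨w, hca ▸ hc, fun i => ?_⟩
  simp [w, hab.symm]

lemma neg_mem_of_notMem (hF : IsRobertsRelation F) {a b : A} (hab : a ≠ b) {α : I → ℝ}
    (hα : α ∉ choiceDiffs F a b) : -α ∈ choiceDiffs F b a := by
  classical
  choose B hB using hF.choiceDiffs_nonempty a
  let v : I → A → ℝ := fun i c =>
    if c = a then 0 else if c = b then - α i else - (B c i + 1)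
  have hv : ∀ i, v i a - v i b = α i := fun i => by simp [v, hab.symm]
  obtain ⟨c, hc⟩ := hF.total v
  have hca : c ≠ a := by
    rintro rfl
    exact hα ⟨v, hc, hv⟩
  have hcb : c = b := by
    by_contra hcb
    refine hF.not_mem_of_forall_lt hca.symm (hB c) (fun i => ?_) hc
    simp [v, hca, hcb]
  subst hcb
  exact ⟨v, hc, fun i => by simp only [Pi.neg_apply]; linarith [hv i]⟩

lemma mem_of_add_lt (hF : IsRobertsRelation F) {a b c : A} (hab : a ≠ b) (hbc : b ≠ c)
    (hac : a ≠ c) {α β γ : I → ℝ} (hα : α ∈ choiceDiffs F a b) (hβ : β ∈ choiceDiffs F b c)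
    (h : ∀ i, α i + β i < γ i) : γ ∈ choiceDiffs F a c := by
  classical
  choose B hB using hF.choiceDiffs_nonempty a
  let v : I → A → ℝ := fun i d =>
    if d = a then 0 else if d = b then - ((γ i + α i - β i) / 2) else if d = c then - γ i
    else - (B d i + 1)
  have hva : ∀ i, v i a = 0 := fun i => by simp [v]
  have hvb : ∀ i, v i b = - ((γ i + α i - β i) / 2) := fun i => by simp [v, hab.symm]
  have hvc : ∀ i, v i c = - γ i := fun i => by simp [v, hac.symm, hbc.symm]
  obtain ⟨d, hd⟩ := hF.total v
  have hdb : d ≠ b := by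
    rintro rfl
    exact hF.not_mem_of_forall_lt hab hα (fun i => by linarith [hva i, hvb i, h i]) hd
  have hdc : d ≠ c := by
    rintro rfl
    exact hF.not_mem_of_forall_lt hbc hβ (fun i => by linarith [hvb i, hvc i, h i]) hd
  have hda : d = a := by
    by_contra hda
    refine hF.not_mem_of_forall_lt (Ne.symm hda) (hB d) (fun i => ?_) hd
    simp [v, hda, hdb, hdc]
  subst hda
  exact ⟨v, hd, fun i => by linarith [hva i, hvc i]⟩

lemma add_nonpos_of_mem (hF : IsRobertsRelation F) {a b : A} (hab : a ≠ b) {α : I → ℝ} {p q : ℝ}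
    (hp : (fun i => α i - p) ∈ choiceDiffs F a b)
    (hq : (fun i => -α i - q) ∈ choiceDiffs F b a) : p + q ≤ 0 := by
  by_contra! h
  obtain ⟨v, hv, hvq⟩ := hq
  exact hF.not_mem_of_forall_lt hab hp (fun i => by linarith [hvq i]) hv

variable [Fintype I]

lemma slack_set_nonempty (hF : IsRobertsRelation F) {a b : A} (hab : a ≠ b) (α : I → ℝ) :
    {p : ℝ | (fun i => α i - p) ∈ choiceDiffs F a b}.Nonempty := by
  obtain ⟨β, hβ⟩ := hF.choiceDiffs_nonempty a b
  obtain ⟨M, hM⟩ := (Set.finite_range fun i => β i - α i).bddAbove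
  refine ⟨-M - 1, hF.mem_of_forall_lt hab hβ fun i => ?_⟩
  linarith [hM (Set.mem_range_self i)]

lemma slack_set_bddAbove (hF : IsRobertsRelation F) {a b : A} (hab : a ≠ b) (α : I → ℝ) :
    BddAbove {p : ℝ | (fun i => α i - p) ∈ choiceDiffs F a b} := by
  obtain ⟨q, hq⟩ := hF.slack_set_nonempty hab.symm (-α)
  exact ⟨-q, fun p hp => by linarith [hF.add_nonpos_of_mem hab hp hq]⟩

lemma le_slack (hF : IsRobertsRelation F) {a b : A} (hab : a ≠ b) {α : I → ℝ} {p : ℝ}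
    (hp : (fun i => α i - p) ∈ choiceDiffs F a b) : p ≤ slack F a b α :=
  le_csSup (hF.slack_set_bddAbove hab α) hp

lemma sub_mem_of_lt_slack (hF : IsRobertsRelation F) {a b : A} (hab : a ≠ b) {α : I → ℝ} {p : ℝ}
    (hp : p < slack F a b α) : (fun i => α i - p) ∈ choiceDiffs F a b := by
  obtain ⟨q, hq, hpq⟩ := exists_lt_of_lt_csSup (hF.slack_set_nonempty hab α) hp
  exact hF.mem_of_forall_lt hab hq fun i => by linarith

lemma slack_neg (hF : IsRobertsRelation F) {a b : A} (hab : a ≠ b) (α : I → ℝ) :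
    slack F b a (-α) = - slack F a b α := by
  apply le_antisymm
  · refine le_of_forall_lt fun q hq => ?_
    by_contra! h
    obtain ⟨r, hqr, hr⟩ := exists_between hq
    have := hF.add_nonpos_of_mem hab (hF.sub_mem_of_lt_slack hab (p := -r) (by linarith))
      (hF.sub_mem_of_lt_slack hab.symm (α := -α) (p := (r + slack F b a (-α)) / 2)
        (by linarith))
    linarith
  · refine le_of_forall_lt fun q hq => ?_
    obtain ⟨r, hqr, hr⟩ := exists_between hq
    refine hqr.trans_le (hF.le_slack hab.symm ?_)
    have hn : (fun i => α i - -r) ∉ choiceDiffs F a b := fun hm => by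
      linarith [hF.le_slack hab hm]
    convert hF.neg_mem_of_notMem hab hn using 1
    ext i
    simp only [Pi.neg_apply]
    ring

lemma add_le_slack (hF : IsRobertsRelation F) {a b c : A} (hab : a ≠ b) (hbc : b ≠ c)
    (hac : a ≠ c) (α β : I → ℝ) :
    slack F a b α + slack F b c β ≤ slack F a c (α + β) := by
  refine le_of_forall_lt fun r hr => ?_
  obtain ⟨s, hrs, hs⟩ := exists_between hr
  refine hrs.trans_le (hF.le_slack hac ?_)
  have hδ : 0 < (slack F a b α + slack F b c β - s) / 4 := by linarith
  set δ := (slack F a b α + slack F b c β - s) / 4 with hδ'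
  refine hF.mem_of_add_lt hab hbc hac
    (hF.sub_mem_of_lt_slack hab (α := α) (p := slack F a b α - δ) (by linarith))
    (hF.sub_mem_of_lt_slack hbc (α := β) (p := slack F b c β - δ) (by linarith)) fun i => ?_
  simp only [Pi.add_apply]
  linarith

lemma slack_add (hF : IsRobertsRelation F) {a b c : A} (hab : a ≠ b) (hbc : b ≠ c)
    (hac : a ≠ c) (α β : I → ℝ) :
    slack F a c (α + β) = slack F a b α + slack F b c β := by
  refine le_antisymm ?_ (hF.add_le_slack hab hbc hac α β)
  have h := hF.add_le_slack hbc.symm hab.symm hac.symm (-β) (-α)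
  rw [hF.slack_neg hbc, hF.slack_neg hab, ← neg_add_rev α β, hF.slack_neg hac] at h
  linarith

lemma slack_mono (hF : IsRobertsRelation F) {a b : A} (hab : a ≠ b) {α β : I → ℝ}
    (h : ∀ i, α i ≤ β i) : slack F a b α ≤ slack F a b β := by
  refine le_of_forall_lt fun r hr => ?_
  obtain ⟨s, hrs, hs⟩ := exists_between hr
  exact hrs.trans_le (hF.le_slack hab (hF.mem_of_forall_lt hab
    (hF.sub_mem_of_lt_slack hab (α := α) (p := (s + slack F a b α) / 2) (by linarith))
    fun i => by linarith [h i]))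

lemma slack_add_const (hF : IsRobertsRelation F) {a b : A} (hab : a ≠ b) (α : I → ℝ) (r : ℝ) :
    slack F a b (fun i => α i + r) = slack F a b α + r := by
  have key : ∀ (α : I → ℝ) (r : ℝ), slack F a b α + r ≤ slack F a b fun i => α i + r := by
    intro α r
    refine le_of_forall_lt fun q hq => ?_
    obtain ⟨s, hqs, hs⟩ := exists_between hq
    refine hqs.trans_le (hF.le_slack hab ?_)
    convert hF.sub_mem_of_lt_slack hab (α := α) (p := s - r) (by linarith) using 1
    ext i
    ring
  refine le_antisymm ?_ (key α r)
  have h := key (fun i => α i + r) (-r)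
  simp only [add_neg_cancel_right] at h
  linarith

/-- The increment of the slack from the zero vector does not depend on the pair of
alternatives. -/
lemma slack_sub_slack_zero_eq [Fintype A] (hA : 3 ≤ Fintype.card A) (hF : IsRobertsRelation F)
    {a b x y : A} (hab : a ≠ b) (hxy : x ≠ y) (α : I → ℝ) :
    slack F a b α - slack F a b 0 = slack F x y α - slack F x y 0 := by
  classical
  have left : ∀ {p q r : A}, p ≠ q → p ≠ r →
      slack F p q α - slack F p q 0 = slack F p r α - slack F p r 0 := by
    intro p q r hpq hpr
    by_cases hqr : q = r
    · rw [hqr]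
    · have h₁ := hF.slack_add hpq hqr hpr α 0
      have h₂ := hF.slack_add hpq hqr hpr 0 0
      rw [add_zero] at h₁ h₂
      linarith
  have right : ∀ {p q r : A}, p ≠ r → q ≠ r →
      slack F p r α - slack F p r 0 = slack F q r α - slack F q r 0 := by
    intro p q r hpr hqr
    by_cases hpq : p = q
    · rw [hpq]
    · have h₁ := hF.slack_add hpq hqr hpr 0 α
      have h₂ := hF.slack_add hpq hqr hpr 0 0
      rw [zero_add] at h₁ h₂
      linarith
  obtain ⟨c, hc⟩ : ∃ c, c ∉ ({a, x} : Finset A) := by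
    by_contra! h
    have h₁ := Finset.card_le_card (fun c _ => h c : Finset.univ ⊆ ({a, x} : Finset A))
    have h₂ := Finset.card_le_two (a := a) (b := x)
    rw [Finset.card_univ] at h₁
    omega
  simp only [Finset.mem_insert, Finset.mem_singleton, not_or] at hc
  rw [left hab (Ne.symm hc.1), right (Ne.symm hc.1) (Ne.symm hc.2), left (Ne.symm hc.2) hxy]

/-- Away from its constant part, the slack is a nonnegative linear form with total weight one. -/
lemma exists_weights [Fintype A] (hA : 3 ≤ Fintype.card A) (hF : IsRobertsRelation F) :
    ∃ k : I → ℝ, (∀ i, 0 ≤ k i) ∧ ∑ i, k i = 1 ∧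
      ∀ a b, a ≠ b → ∀ α, slack F a b α = ∑ i, k i * α i + slack F a b 0 := by
  classical
  obtain ⟨a, b, c, hab, hac, hbc⟩ := Fintype.two_lt_card_iff.1 hA
  have hL := fun {x y : A} (hxy : x ≠ y) => hF.slack_sub_slack_zero_eq hA hab hxy
  let L : (I → ℝ) →+ ℝ := AddMonoidHom.mk' (fun α => slack F a b α - slack F a b 0) (by
    intro α β
    have h₁ := hF.slack_add hab hbc hac α β
    have h₂ := hF.slack_add hab hbc hac 0 0
    rw [add_zero] at h₂
    linarith [hL hac (α + β), hL hbc β])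
  have hLapply : ∀ α, L α = slack F a b α - slack F a b 0 := fun _ => rfl
  have hconst : ∀ r : ℝ, L (fun _ => r) = r := by
    intro r
    have h := hF.slack_add_const hab 0 r
    simp only [Pi.zero_apply, zero_add] at h
    rw [hLapply, h]
    ring
  have hmono : ∀ {α β : I → ℝ}, (∀ i, α i ≤ β i) → L α ≤ L β := fun h =>
    sub_le_sub_right (hF.slack_mono hab h) _
  have hbound : ∀ α, ‖L α‖ ≤ 1 * ‖α‖ := by
    intro α
    rw [one_mul, Real.norm_eq_abs, abs_le]
    have hα : ∀ i, |α i| ≤ ‖α‖ := fun i => norm_le_pi_norm α i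
    constructor
    · simpa only [hconst] using hmono (α := fun _ => -‖α‖) fun i => (abs_le.1 (hα i)).1
    · simpa only [hconst] using hmono (β := fun _ => ‖α‖) fun i => (abs_le.1 (hα i)).2
  let T : (I → ℝ) →L[ℝ] ℝ := L.toRealLinearMap (AddMonoidHomClass.continuous_of_bound L 1 hbound)
  have hT : ∀ α, T α = ∑ i, L (Pi.single i 1) * α i := by
    intro α
    have h := T.toLinearMap.pi_apply_eq_sum_univ α
    simp only [ContinuousLinearMap.coe_coe, smul_eq_mul] at h
    rw [h]
    refine Finset.sum_congr rfl fun i _ => ?_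
    rw [mul_comm]
    refine congrArg (· * α i) (congrArg L ?_)
    ext j
    simp [Pi.single_apply, eq_comm]
  refine ⟨fun i => L (Pi.single i 1), fun i => ?_, ?_, fun x y hxy α => ?_⟩
  · rw [← map_zero L]
    refine hmono fun j => ?_
    by_cases h : j = i
    · subst h; simp
    · simp [h]
  · have h := hT fun _ => 1
    simp only [mul_one] at h
    rw [← h]
    exact hconst 1
  · rw [← hT, show T α = L α from rfl, hLapply, hL hxy α]
    ring

/-- Roberts' theorem for choice relations. -/
theorem exists_affine_maximizer [Fintype A] (hA : 3 ≤ Fintype.card A)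
    (hF : IsRobertsRelation F) :
    ∃ (k : I → ℝ) (C : A → ℝ), (∀ i, 0 ≤ k i) ∧ (∃ i, k i ≠ 0) ∧
      ∀ v a, F v a → ∀ b, (∑ i, k i * v i b) + C b ≤ (∑ i, k i * v i a) + C a := by
  classical
  obtain ⟨k, hk, hsum, hslack⟩ := hF.exists_weights hA
  obtain ⟨o⟩ : Nonempty A := Fintype.card_pos_iff.1 (by omega)
  let C : A → ℝ := fun a => if a = o then 0 else slack F a o 0
  have hC : ∀ a b, a ≠ b → slack F a b 0 = C a - C b := by
    intro a b hab
    have hneg : ∀ {x y : A}, x ≠ y → slack F y x 0 = - slack F x y 0 := fun hxy => by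
      simpa using hF.slack_neg hxy 0
    by_cases ha : a = o
    · subst ha
      simp [C, hab.symm, hneg hab.symm]
    by_cases hb : b = o
    · subst hb
      simp [C, hab]
    · have h := hF.slack_add ha (Ne.symm hb) hab 0 0
      rw [add_zero, hneg hb] at h
      simp only [C, if_neg ha, if_neg hb]
      linarith
  refine ⟨k, C, hk, ?_, fun v a hv b => ?_⟩
  · by_contra! h
    simp [h] at hsum
  · by_cases hab : a = b
    · rw [hab]
    have h := hF.le_slack hab (α := fun i => v i a - v i b) (p := 0)
      ⟨v, hv, fun i => by ring⟩
    rw [hslack a b hab, hC a b hab] at h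
    simp only [mul_sub, Finset.sum_sub_distrib] at h
    linarith

end IsRobertsRelation

/-- If every agent's willingness to pay shifts strictly towards the chosen alternative, then a
DSIC mechanism keeps choosing it. -/
lemma DSIC.choice_eq_of_forall_lt [Fintype A] [Nonempty A] [Fintype I] [DecidableEq I]
    {U : I → Set (Util A)} (hpar : ∀ i, ∀ u ∈ U i, IsStrictlyParallel u)
    {x : (I → Util A) → A} {t : (I → Util A) → I → ℝ} (hDSIC : DSIC U x t)
    {u u' : I → Util A} (hu : ∀ j, u j ∈ U j) (hu' : ∀ j, u' j ∈ U j)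
    (h : ∀ i b, b ≠ x u →
      wtp (u i) (x u) - wtp (u i) b < wtp (u' i) (x u) - wtp (u' i) b) :
    x u' = x u := by
  suffices key : ∀ s : Finset I, x (s.piecewise u' u) = x u by
    simpa using key Finset.univ
  intro s
  induction s using Finset.induction_on with
  | empty => simp
  | insert i s hi ih =>
    have hmem : ∀ r : Finset I, ∀ j, r.piecewise u' u j ∈ U j := fun r j => by
      by_cases hj : j ∈ r <;> simp [hj, hu, hu']
    by_contra hne
    have h₁ := hDSIC _ (hmem s) i (u' i) (hu' i)
    have h₂ := hDSIC _ (hmem (insert i s)) i (u i) (hu i)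
    have hback : Function.update ((insert i s).piecewise u' u) i (u i) = s.piecewise u' u := by
      rw [Finset.piecewise_insert, Function.update_idem, Function.update_eq_self_iff]
      simp [hi]
    rw [← Finset.piecewise_insert] at h₁
    rw [hback] at h₂
    have h₃ := (hpar i _ (hu' i)).sub_le_sub_of_le h₁
    have h₄ := (hpar i _ (hu i)).sub_le_sub_of_le h₂
    rw [ih] at h₃ h₄
    linarith [h i _ hne]

/-- The choice relation induced on valuation profiles, which are matched with willingness to pay
up to a constant for each agent. -/
def inducedChoice [Fintype A] [Nonempty A] (U : I → Set (Util A)) (x : (I → Util A) → A)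
    (v : I → A → ℝ) (a : A) : Prop :=
  ∃ u : I → Util A, (∀ j, u j ∈ U j) ∧
    (∀ i b c, wtp (u i) b - wtp (u i) c = v i b - v i c) ∧ x u = a

lemma isRobertsRelation_inducedChoice [Fintype A] [Nonempty A] [Fintype I] [DecidableEq I]
    {U : I → Set (Util A)} (hpar : ∀ i, ∀ u ∈ U i, IsStrictlyParallel u)
    (hunr : ∀ i, UnrestrictedWTP (U i))
    {x : (I → Util A) → A} {t : (I → Util A) → I → ℝ}
    (hDSIC : DSIC U x t) (hOnto : OntoMech U x) :
    IsRobertsRelation (inducedChoice U x) where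
  total v := by
    choose m hm using fun i => Finite.exists_min (v i)
    choose u hu huv using fun i => hunr i (fun a => v i a - v i (m i))
      (fun a => sub_nonneg.2 (hm i a)) ⟨m i, sub_self _⟩
    exact ⟨x u, u, hu, fun i b c => by rw [huv, huv]; ring, rfl⟩
  onto a := by
    obtain ⟨u, hu, hx⟩ := hOnto a
    exact ⟨fun i => wtp (u i), u, hu, fun _ _ _ => rfl, hx⟩
  pad := by
    rintro v v' a c ⟨u, hu, huv, rfl⟩ ⟨u', hu', huv', rfl⟩ h
    refine hDSIC.choice_eq_of_forall_lt hpar hu hu' fun i b hb => ?_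
    rw [huv, huv']
    exact h i b hb

/-- Roberts' theorem on strictly parallel domains. With `|A| ≥ 3`
and an unrestricted strictly parallel domain, every DSIC, deterministic, onto mechanism
has a choice rule that is an affine maximizer of willingness to pay. -/
theorem roberts_strictly_parallel
    [Fintype A] [Nonempty A] [Fintype I] [DecidableEq I]
    (hA : 3 ≤ Fintype.card A)
    (U : I → Set (Util A))
    (hpar : ∀ i, ∀ u ∈ U i, IsStrictlyParallel u)
    (hunr : ∀ i, UnrestrictedWTP (U i))
    (x : (I → Util A) → A) (t : (I → Util A) → I → ℝ)
    (hDSIC : DSIC U x t) (hOnto : OntoMech U x) :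
    ∃ (k : I → ℝ) (C : A → ℝ), (∀ i, 0 ≤ k i) ∧ (∃ i, k i ≠ 0) ∧
      ∀ u : I → Util A, (∀ j, u j ∈ U j) → ∀ b : A,
        (∑ i, k i * wtp (u i) b) + C b ≤ (∑ i, k i * wtp (u i) (x u)) + C (x u) := by
  obtain ⟨k, C, hk, hk0, hmax⟩ :=
    (isRobertsRelation_inducedChoice hpar hunr hDSIC hOnto).exists_affine_maximizer hA
  exact ⟨k, C, hk, hk0, fun u hu b =>
    hmax (fun i => wtp (u i)) (x u) ⟨u, hu, fun _ _ _ => rfl, rfl⟩ b⟩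

end NQLSC
end
end
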